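/- (Gandhi's formula) For every positive integer n, p_{n+1} = ⌊1 − log₂(θ(n))⌋ = ⌊log₂(2/θ(n))⌋, where ⌊·⌋ denotes the floor function. -/

import Mathlib

/-!
Expanding `1 / (2 ^ d - 1)` as the geometric series `∑ 2 ^ (-m)` over the positive multiples `m` of
`d` and exchanging sums, the coefficient of `2 ^ (-m)` in `∑_{d ∣ P} μ(d) / (2 ^ d - 1)` is
`∑_{d ∣ gcd(m, P)} μ(d)`, which is `1` if `m` is coprime to `P` and `0` otherwise
(`hasSum_coprime`). With `P = p_n#`, the summand `-1/2` of `θ(n)` removes `m = 1`, so `θ(n)` is the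
sum of `2 ^ (-m)` over all `m ≥ 2` coprime to `p_n#` (`hasSum_theta`). The least such `m` is
`q = p_{n+1}`, and `q ^ 2` is another, whence `2 ^ (-q) < θ(n) ≤ ∑_{m ≥ q} 2 ^ (-m) = 2 ^ (1 - q)`
(`lt_theta`, `theta_le`). Taking logarithms gives `q ≤ 1 - log₂ θ(n) < q + 1`.
-/

open scoped BigOperators

/-- `nthPrime k` is the k-th prime with 1-based indexing: p₁ = 2, p₂ = 3, ... -/
noncomputable def nthPrime (k : ℕ) : ℕ := Nat.nth Nat.Prime (k - 1)

/-- `primorialN n` is `p_n# = p₁ ⬝ p₂ ⋯ p_n`, the product of the first `n` primes. -/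
noncomputable def primorialN (n : ℕ) : ℕ := ∏ i ∈ Finset.range n, Nat.nth Nat.Prime i

/-- `theta n = -1/2 + ∑_{d ∣ p_n#} μ(d)/(2^d - 1)`. -/
noncomputable def theta (n : ℕ) : ℝ :=
  -1/2 + ∑ d ∈ (primorialN n).divisors,
    ((ArithmeticFunction.moebius d : ℤ) : ℝ) / (2 ^ d - 1)

/-- The geometric series of ratio `2 ^ (-d)`, indexed by the positive multiples of `d`. -/
lemma hasSum_multiples {d : ℕ} (hd : 0 < d) :
    HasSum (fun m : ℕ => if m ≠ 0 ∧ d ∣ m then (1 / 2 : ℝ) ^ m else 0) (1 / (2 ^ d - 1)) := by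
  have hinj : Function.Injective (fun k : ℕ => d * (k + 1)) := by
    intro a b h
    simpa [hd.ne'] using h
  rw [← hinj.hasSum_iff]
  · have hlt : ((1 / 2 : ℝ) ^ d) < 1 := pow_lt_one₀ (by norm_num) (by norm_num) hd.ne'
    have h := (hasSum_geometric_of_lt_one (by positivity) hlt).mul_left ((1 / 2 : ℝ) ^ d)
    convert h using 1
    · rfl
    · funext k
      simp [hd.ne', pow_mul, pow_succ', mul_comm]
    · have h2 : (1 : ℝ) < 2 ^ d := one_lt_pow₀ (by norm_num) hd.ne'
      have h3 : (2 : ℝ) ^ d - 1 ≠ 0 := by linarith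
      rw [one_div_pow]
      field_simp
  · intro m hm
    refine if_neg ?_
    rintro ⟨h0, k, rfl⟩
    refine hm ⟨k - 1, ?_⟩
    have : k ≠ 0 := by
      rintro rfl
      simp at h0
    simp only
    rw [Nat.sub_add_cancel (by omega)]

lemma sum_moebius_divisors_gcd {P m : ℕ} (hP : P ≠ 0) :
    ∑ d ∈ P.divisors, (if d ∣ m then ((ArithmeticFunction.moebius d : ℤ) : ℝ) else 0) =
      if Nat.Coprime m P then 1 else 0 := by
  have hset : P.divisors.filter (fun d => d ∣ m) = (m.gcd P).divisors := by
    ext d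
    simp [Nat.dvd_gcd_iff, hP]
    tauto
  rw [← Finset.sum_filter, hset]
  have h := congrArg (fun f : ArithmeticFunction ℤ => f (m.gcd P))
    ArithmeticFunction.coe_zeta_mul_moebius
  simp only [ArithmeticFunction.coe_zeta_mul_apply, ArithmeticFunction.one_apply] at h
  rw [← Int.cast_sum, h]
  simp [Nat.Coprime]

lemma hasSum_coprime {P : ℕ} (hP : P ≠ 0) :
    HasSum (fun m : ℕ => if m ≠ 0 ∧ Nat.Coprime m P then (1 / 2 : ℝ) ^ m else 0)
      (∑ d ∈ P.divisors, ((ArithmeticFunction.moebius d : ℤ) : ℝ) / (2 ^ d - 1)) := by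
  have h := hasSum_sum (s := P.divisors) fun d hd =>
    (hasSum_multiples (Nat.pos_of_mem_divisors hd)).mul_left
      ((ArithmeticFunction.moebius d : ℤ) : ℝ)
  simp only [mul_one_div] at h
  convert h using 1
  · rfl
  funext m
  rcases eq_or_ne m 0 with rfl | hm
  · simp
  · have h2 := congrArg (· * (1 / 2 : ℝ) ^ m) (sum_moebius_divisors_gcd (m := m) hP)
    simp only [Finset.sum_mul, ite_mul, one_mul, zero_mul] at h2
    simp only [ne_eq, hm, not_false_eq_true, true_and, mul_ite, mul_zero]
    exact h2.symm

lemma primorialN_ne_zero (n : ℕ) : primorialN n ≠ 0 :=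
  Finset.prod_ne_zero_iff.2 fun i _ => (Nat.prime_nth_prime i).ne_zero

lemma hasSum_theta (n : ℕ) :
    HasSum (fun m : ℕ => if 2 ≤ m ∧ Nat.Coprime m (primorialN n) then (1 / 2 : ℝ) ^ m else 0)
      (theta n) := by
  have h := (hasSum_ite_eq (1 : ℕ) (-1 / 2 : ℝ)).add (hasSum_coprime (primorialN_ne_zero n))
  unfold theta
  convert h using 1
  funext m
  rcases m with _ | _ | m
  · simp
  · norm_num
  · simp

lemma coprime_nthPrime (n : ℕ) : Nat.Coprime (nthPrime (n + 1)) (primorialN n) := by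
  refine Nat.Coprime.prod_right fun i hi => ?_
  refine (Nat.coprime_primes (Nat.prime_nth_prime _) (Nat.prime_nth_prime _)).2 ?_
  exact (Nat.nth_strictMono Nat.infinite_setOfPred_prime (Finset.mem_range.1 hi)).ne'

lemma nthPrime_le_of_coprime {n m : ℕ} (hm : 2 ≤ m) (h : Nat.Coprime m (primorialN n)) :
    nthPrime (n + 1) ≤ m := by
  have hp : m.minFac.Prime := Nat.minFac_prime (by omega)
  refine le_trans ?_ (Nat.minFac_le (by omega))
  by_contra! hlt
  rw [← Nat.nth_count hp] at hlt
  have hi : Nat.count Nat.Prime m.minFac < n :=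
    (Nat.nth_strictMono Nat.infinite_setOfPred_prime).lt_iff_lt.1 hlt
  have hdvd : m.minFac ∣ primorialN n := by
    have := Finset.dvd_prod_of_mem (Nat.nth Nat.Prime) (Finset.mem_range.2 hi)
    rwa [Nat.nth_count hp] at this
  exact Nat.not_coprime_of_dvd_of_dvd hp.one_lt (Nat.minFac_dvd m) hdvd h

/-- The terms `m = q` and `m = q ^ 2` with `q = p_{n+1}` make the inequality strict. -/
lemma lt_theta (n : ℕ) : (1 / 2 : ℝ) ^ nthPrime (n + 1) < theta n := by
  have hq : 2 ≤ nthPrime (n + 1) := (Nat.prime_nth_prime n).two_le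
  have hc := coprime_nthPrime n
  have hs := hasSum_theta n
  set q := nthPrime (n + 1)
  have hne : q ≠ q ^ 2 := by nlinarith
  have h := sum_le_hasSum {q, q ^ 2} (fun m _ => by positivity) hs
  rw [Finset.sum_pair hne, if_pos ⟨hq, hc⟩, if_pos ⟨by nlinarith, hc.pow_left 2⟩] at h
  have : (0 : ℝ) < (1 / 2) ^ q ^ 2 := by positivity
  linarith

lemma theta_le (n : ℕ) : theta n ≤ 2 * (1 / 2 : ℝ) ^ nthPrime (n + 1) := by
  have htail : HasSum (fun m : ℕ => if nthPrime (n + 1) ≤ m then (1 / 2 : ℝ) ^ m else 0)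
      (2 * (1 / 2 : ℝ) ^ nthPrime (n + 1)) := by
    rw [← (add_right_injective (nthPrime (n + 1))).hasSum_iff]
    · convert hasSum_geometric_two.mul_left ((1 / 2 : ℝ) ^ nthPrime (n + 1)) using 1
      · rfl
      · funext k
        simp [pow_add, mul_comm]
      · ring
    · intro m hm
      refine if_neg fun hle => hm ⟨m - nthPrime (n + 1), ?_⟩
      simp only
      omega
  refine hasSum_le (fun m => ?_) (hasSum_theta n) htail
  split_ifs with h1 h2 h2
  · exact le_rfl
  · exact absurd (nthPrime_le_of_coprime h1.1 h1.2) h2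
  · positivity
  · exact le_rfl

/-- Gandhi's formula: for every positive integer `n`,
`p_{n+1} = ⌊1 - log₂(θ(n))⌋ = ⌊log₂(2/θ(n))⌋`. -/
theorem gandhi_formula (n : ℕ) (hn : 0 < n) :
    (nthPrime (n + 1) : ℤ) = ⌊1 - Real.logb 2 (theta n)⌋ ∧
      (nthPrime (n + 1) : ℤ) = ⌊Real.logb 2 (2 / theta n)⌋ := by
  have hlow := lt_theta n
  have hup := theta_le n
  have hpos : 0 < theta n := lt_trans (by positivity) hlow
  have key : (nthPrime (n + 1) : ℤ) = ⌊1 - Real.logb 2 (theta n)⌋ := by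
    have hpow (k : ℕ) : Real.logb 2 ((1 / 2 : ℝ) ^ k) = -k := by
      rw [one_div, inv_pow, Real.logb_inv, Real.logb_pow, Real.logb_self_eq_one (by norm_num),
        mul_one]
    have h1 := Real.logb_lt_logb (b := 2) (by norm_num) (by positivity) hlow
    have h2 := Real.logb_le_logb_of_le (b := 2) (by norm_num) hpos hup
    rw [Real.logb_mul (by norm_num) (by positivity), Real.logb_self_eq_one (by norm_num)] at h2
    rw [hpow] at h1 h2
    symm
    rw [Int.floor_eq_iff]
    push_cast
    constructor <;> linarith
  refine ⟨key, ?_⟩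
  rw [Real.logb_div (by norm_num) hpos.ne', Real.logb_self_eq_one (by norm_num)]
  exact key
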